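/- arXiv:1708.01575 — 4 statements merged into one kernel-verified Lean document; each statement's English description precedes it below -/
import Mathlib

section
/- Let m ≥ 1 and let B be an m×m real matrix. Then det(I_m + Bᵀ B) equals the sum, over all k with 0 ≤ k ≤ m and over all pairs (I, J) of subsets of {1,…,m} with |I| = |J| = k, of the squares det(B_{I,J})², where B_{I,J} denotes the k×k submatrix of B with rows indexed by I and columns indexed by J (the term for k = 0 is 1). In particular det(I_m + Bᵀ B) = 1 + Σ_{i,j} b_{ij}² + Σ_{i1<i2, j1<j2} det(B^{i1 i2}_{j1 j2})² + ⋯ + (det B)². -/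
open Matrix BigOperators

/-- The `k × k` minor of a square matrix `B` with rows indexed by the subset `I`
and columns indexed by the subset `J` (both of cardinality `k`),
taken in increasing order; `0` if the cardinalities are wrong. -/
noncomputable def matrixMinor {m : ℕ} (B : Matrix (Fin m) (Fin m) ℝ) (k : ℕ)
    (I J : Finset (Fin m)) : ℝ :=
  if h : I.card = k ∧ J.card = k then
    (B.submatrix (fun i : Fin k => I.orderEmbOfFin h.1 i)
      (fun j : Fin k => J.orderEmbOfFin h.2 j)).det
  else 0

lemma aux_det_one_add {m : ℕ} (M : Matrix (Fin m) (Fin m) ℝ) :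
    (1 + M).det = ∑ s : Finset (Fin m),
      (M.submatrix (Subtype.val : s → Fin m) (Subtype.val : s → Fin m)).det := by
  rw [add_comm]
  have h := (detRowAlternating : (Fin m → ℝ) [⋀^Fin m]→ₗ[ℝ] ℝ).map_add_univ M.row
    (1 : Matrix (Fin m) (Fin m) ℝ).row
  refine Eq.trans h (Finset.sum_congr rfl fun s _ => ?_)
  exact det_piecewise_one_eq_submatrix_det M s

lemma aux_fiber {m k : ℕ} (A : Matrix (Fin m) (Fin k) ℝ) (I : Finset (Fin m)) (h : I.card = k) :
    ∑ p : Fin k → Fin m with Finset.univ.image p = I,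
      (∏ i, A (p i) i) * (A.submatrix p id).det =
    (A.submatrix (fun i => I.orderEmbOfFin h i) id).det ^ 2 := by
  have hs : ∑ σ : Equiv.Perm (Fin k), (∏ i, A (I.orderEmbOfFin h (σ i)) i) *
      (A.submatrix (fun i => I.orderEmbOfFin h (σ i)) id).det =
      ∑ p : Fin k → Fin m with Finset.univ.image p = I,
      (∏ i, A (p i) i) * (A.submatrix p id).det := by
    refine Finset.sum_bij (fun σ _ => fun i => I.orderEmbOfFin h (σ i)) ?_ ?_ ?_ ?_
    · intro σ _
      simp only [Finset.mem_filter, Finset.mem_univ, true_and]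
      ext x
      rw [← Finset.mem_coe (s := I), ← Finset.range_orderEmbOfFin I h]
      simp only [Finset.mem_image, Finset.mem_univ, true_and, Set.mem_range]
      exact (σ.surjective.exists (p := fun y => I.orderEmbOfFin h y = x)).symm
    · intro σ _ τ _ hst
      ext i
      have := (I.orderEmbOfFin h).injective (congrFun hst i)
      rw [this]
    · intro p hp
      simp only [Finset.mem_filter, Finset.mem_univ, true_and] at hp
      have hpi : Function.Injective p := by
        have : (Finset.univ.image p).card = (Finset.univ : Finset (Fin k)).card := by
          rw [hp, h]; simp
        have := Finset.card_image_iff.1 this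
        simpa using this
      have hq : ∀ i, ∃ j, I.orderEmbOfFin h j = p i := by
        intro i
        have : p i ∈ (I : Set (Fin m)) := by
          rw [← hp]; simp
        rwa [← Finset.range_orderEmbOfFin I h] at this
      choose q hq using hq
      have hqi : Function.Injective q := by
        intro a b hab
        apply hpi
        rw [← hq, ← hq, hab]
      refine ⟨Equiv.ofBijective q (Finite.injective_iff_bijective.1 hqi), Finset.mem_univ _, ?_⟩
      funext i
      exact hq i
    · intro σ _
      rfl
  rw [← hs, pow_two]
  conv_rhs => enter [1]; rw [det_apply']
  rw [Finset.sum_mul]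
  refine Finset.sum_congr rfl fun σ _ => ?_
  have := det_permute σ (A.submatrix (fun i => I.orderEmbOfFin h i) id)
  rw [submatrix_submatrix] at this
  have h2 : (A.submatrix (fun i => I.orderEmbOfFin h (σ i)) id).det = _ := this
  rw [h2]
  simp only [submatrix_apply, id]
  ring

lemma aux_cauchy_binet {m k : ℕ} (A : Matrix (Fin m) (Fin k) ℝ) :
    (Aᵀ * A).det = ∑ I ∈ Finset.univ.powersetCard k,
      if h : I.card = k then (A.submatrix (fun i => I.orderEmbOfFin h i) id).det ^ 2 else 0 := by
  have h1 : (Aᵀ * A).det =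
      ∑ p : Fin k → Fin m, (∏ i, A (p i) i) * (A.submatrix p id).det := by
    have h := (detRowAlternating : (Fin k → ℝ) [⋀^Fin k]→ₗ[ℝ] ℝ).toMultilinearMap.map_sum
      (fun (i : Fin k) (l : Fin m) => A l i • A l)
    have e : (Aᵀ * A) = (fun i => ∑ l, A l i • A l) := by
      funext i j
      simp [mul_apply]
    rw [e]
    refine Eq.trans h (Finset.sum_congr rfl fun p _ => ?_)
    exact (detRowAlternating : (Fin k → ℝ) [⋀^Fin k]→ₗ[ℝ] ℝ).toMultilinearMap.map_smul_univ
      (fun i => A (p i) i) (fun i => A (p i))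
  rw [h1, ← Finset.sum_fiberwise Finset.univ (fun p : Fin k → Fin m => Finset.univ.image p)]
  symm
  apply Finset.sum_subset_zero_on_sdiff (Finset.subset_univ _)
  · intro I hI
    have hI : I.card ≠ k := by simpa [Finset.mem_powersetCard] using hI
    refine Finset.sum_eq_zero fun p hp => ?_
    simp only [Finset.mem_filter, Finset.mem_univ, true_and] at hp
    have : ¬ Function.Injective p := by
      intro hi
      apply hI
      rw [← hp, Finset.card_image_of_injective _ hi]
      simp
    simp only [Function.Injective, not_forall] at this
    obtain ⟨a, b, hab, hne⟩ := this
    rw [det_zero_of_row_eq hne, mul_zero]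
    funext j
    simp [hab]
  · intro I hI
    have hI : I.card = k := (Finset.mem_powersetCard.1 hI).2
    rw [dif_pos hI, aux_fiber A I hI]

/-- `det (I + Bᵀ B)` is the sum of the squares of all minors of `B`
(of all sizes `0 ≤ k ≤ m`; the `k = 0` term is `1`). -/
theorem det_one_add_transpose_mul_eq_sum_sq_minors
    (m : ℕ) (hm : 1 ≤ m) (B : Matrix (Fin m) (Fin m) ℝ) :
    (1 + Bᵀ * B).det =
      ∑ k ∈ Finset.range (m + 1),
        ∑ I ∈ Finset.univ.powersetCard k,
          ∑ J ∈ Finset.univ.powersetCard k,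
            (matrixMinor B k I J) ^ 2 := by
  rw [aux_det_one_add, ← Finset.powerset_univ, Finset.sum_powerset]
  simp only [Finset.card_univ, Fintype.card_fin]
  refine Finset.sum_congr rfl fun k _ => ?_
  rw [Finset.sum_comm]
  refine Finset.sum_congr rfl fun J hJ => ?_
  have hJ : J.card = k := (Finset.mem_powersetCard.1 hJ).2
  rw [← det_submatrix_equiv_self (J.orderIsoOfFin hJ).toEquiv]
  have e : ((Bᵀ * B).submatrix (Subtype.val : J → Fin m) (Subtype.val : J → Fin m)).submatrix
      (J.orderIsoOfFin hJ).toEquiv (J.orderIsoOfFin hJ).toEquiv =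
      (B.submatrix id (fun j => J.orderEmbOfFin hJ j))ᵀ *
        (B.submatrix id (fun j => J.orderEmbOfFin hJ j)) := by
    ext i j
    simp [mul_apply]
  rw [e, aux_cauchy_binet]
  refine Finset.sum_congr rfl fun I hI => ?_
  have hI : I.card = k := (Finset.mem_powersetCard.1 hI).2
  rw [dif_pos hI, matrixMinor, dif_pos ⟨hI, hJ⟩]
  rfl
end

section
/- Let m ≥ 1 and let d₁, …, d_{2m} be nonnegative real numbers. Then √(∏_{i=1}^{2m} (1 + d_i²)) ≥ Σ_{k=0}^{m} C(m,k) · C(2m,2k)⁻¹ · e_{2k}(d₁, …, d_{2m}), where e_{2k} denotes the elementary symmetric polynomial of degree 2k in 2m variables (with e₀ = 1) and C(a,b) denotes the binomial coefficient. -/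
open BigOperators

/-- The permutation sum of a monomial depends only on its degree. -/
lemma perm_sum_eq {n : ℕ} (d : Fin n → ℝ) (T T' : Finset (Fin n)) (h : T.card = T'.card) :
    ∑ σ : Equiv.Perm (Fin n), ∏ i ∈ T, d (σ i) =
      ∑ σ : Equiv.Perm (Fin n), ∏ i ∈ T', d (σ i) := by
  classical
  let e : {x // x ∈ T} ≃ {x // x ∈ T'} := Finset.equivOfCardEq h
  let τ : Equiv.Perm (Fin n) := e.extendSubtype
  have hτ : T.map τ.toEmbedding = T' := by
    apply Finset.eq_of_subset_of_card_le
    · intro x hx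
      obtain ⟨y, hy, rfl⟩ := Finset.mem_map.1 hx
      exact e.extendSubtype_mem y hy
    · simp [h]
  rw [← hτ]
  simp only [Finset.prod_map, Equiv.coe_toEmbedding]
  exact (Fintype.sum_equiv (Equiv.mulRight τ) _ _ (fun σ => by simp)).symm

lemma choose_mul_perm_sum {n : ℕ} (d : Fin n → ℝ) (T : Finset (Fin n)) :
    (n.choose T.card : ℝ) * ∑ σ : Equiv.Perm (Fin n), ∏ i ∈ T, d (σ i) =
      (n.factorial : ℝ) * ∑ t ∈ Finset.univ.powersetCard T.card, ∏ i ∈ t, d i := by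
  classical
  have h1 : ∑ t ∈ (Finset.univ : Finset (Fin n)).powersetCard T.card,
      ∑ σ : Equiv.Perm (Fin n), ∏ i ∈ t, d (σ i) =
      (n.choose T.card : ℝ) * ∑ σ : Equiv.Perm (Fin n), ∏ i ∈ T, d (σ i) := by
    rw [Finset.sum_congr rfl (fun t ht =>
      perm_sum_eq d t T (Finset.mem_powersetCard.1 ht).2)]
    simp
  rw [← h1, Finset.sum_comm]
  have h2 : ∀ σ : Equiv.Perm (Fin n),
      ∑ t ∈ (Finset.univ : Finset (Fin n)).powersetCard T.card, ∏ i ∈ t, d (σ i) =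
      ∑ t ∈ (Finset.univ : Finset (Fin n)).powersetCard T.card, ∏ i ∈ t, d i := by
    intro σ
    refine Finset.sum_equiv σ.finsetCongr ?_ ?_
    · intro t
      simp [Finset.mem_powersetCard]
    · intro t _
      simp
  simp [h2, Fintype.card_perm]

/-- For nonnegative reals `d₁, …, d_{2m}`,
`√(∏ (1 + dᵢ²)) ≥ ∑_{k=0}^{m} C(m,k) C(2m,2k)⁻¹ e_{2k}(d)`,
where `e_{2k}` is the elementary symmetric polynomial of degree `2k`. -/
theorem sqrt_prod_one_add_sq_ge_sum_esymm
    (m : ℕ) (hm : 1 ≤ m) (d : Fin (2 * m) → ℝ) (hd : ∀ i, 0 ≤ d i) :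
    Real.sqrt (∏ i, (1 + d i ^ 2)) ≥
      ∑ k ∈ Finset.range (m + 1),
        (m.choose k : ℝ) * ((2 * m).choose (2 * k) : ℝ)⁻¹ *
          ∑ t ∈ Finset.univ.powersetCard (2 * k), ∏ i ∈ t, d i := by
  classical
  let e : Fin 2 × Fin m ≃ Fin (2 * m) := finProdFinEquiv
  -- Cauchy-Schwarz for each perfect matching
  have key : ∀ σ : Equiv.Perm (Fin (2 * m)),
      ∏ j : Fin m, (1 + d (σ (e (0, j))) * d (σ (e (1, j)))) ≤
        Real.sqrt (∏ i, (1 + d i ^ 2)) := by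
    intro σ
    apply Real.le_sqrt_of_sq_le
    have h : ∏ i, (1 + d i ^ 2) =
        ∏ j : Fin m, ((1 + d (σ (e (0, j))) ^ 2) * (1 + d (σ (e (1, j))) ^ 2)) := by
      rw [← Equiv.prod_comp (e.trans σ), Fintype.prod_prod_type_right]
      simp [Fin.prod_univ_two]
    rw [h, ← Finset.prod_pow]
    apply Finset.prod_le_prod
    · intro j _
      positivity
    · intro j _
      nlinarith [sq_nonneg (d (σ (e (0, j))) - d (σ (e (1, j))))]
  have hsum := Finset.sum_le_sum (s := (Finset.univ : Finset (Equiv.Perm (Fin (2 * m)))))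
    (fun σ _ => key σ)
  have hexp : ∑ σ : Equiv.Perm (Fin (2 * m)),
      ∏ j : Fin m, (1 + d (σ (e (0, j))) * d (σ (e (1, j)))) =
      ((2 * m).factorial : ℝ) * ∑ k ∈ Finset.range (m + 1),
        (m.choose k : ℝ) * ((2 * m).choose (2 * k) : ℝ)⁻¹ *
          ∑ t ∈ Finset.univ.powersetCard (2 * k), ∏ i ∈ t, d i := by
    simp_rw [Finset.prod_one_add]
    rw [Finset.sum_comm, Finset.sum_powerset, Finset.mul_sum]
    simp only [Finset.card_univ, Fintype.card_fin]
    refine Finset.sum_congr rfl fun k hk => ?_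
    have hk' : k ≤ m := by
      have := Finset.mem_range.1 hk
      omega
    have hS : ∀ S ∈ (Finset.univ : Finset (Fin m)).powersetCard k,
        ∑ σ : Equiv.Perm (Fin (2 * m)), ∏ j ∈ S, (d (σ (e (0, j))) * d (σ (e (1, j)))) =
        ((2 * m).choose (2 * k) : ℝ)⁻¹ * (((2 * m).factorial : ℝ) *
          ∑ t ∈ Finset.univ.powersetCard (2 * k), ∏ i ∈ t, d i) := by
      intro S hS
      have hc : S.card = k := (Finset.mem_powersetCard.1 hS).2
      have hT := choose_mul_perm_sum d
        (((Finset.univ : Finset (Fin 2)) ×ˢ S).map e.toEmbedding)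
      have hcard : (((Finset.univ : Finset (Fin 2)) ×ˢ S).map e.toEmbedding).card = 2 * k := by
        simp [hc]
      rw [hcard] at hT
      have hne : ((2 * m).choose (2 * k) : ℝ) ≠ 0 := by
        exact_mod_cast (Nat.choose_pos (by omega : 2 * k ≤ 2 * m)).ne'
      rw [← hT, inv_mul_cancel_left₀ hne]
      refine Finset.sum_congr rfl fun σ _ => ?_
      rw [Finset.prod_map, Finset.prod_product_right]
      simp [Fin.prod_univ_two]
    rw [Finset.sum_congr rfl hS]
    simp only [Finset.sum_const, Finset.card_powersetCard, Finset.card_univ, Fintype.card_fin,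
      nsmul_eq_mul]
    ring
  rw [hexp] at hsum
  simp only [Finset.sum_const, Finset.card_univ, Fintype.card_perm, Fintype.card_fin,
    nsmul_eq_mul] at hsum
  have hpos : (0 : ℝ) < ((2 * m).factorial : ℝ) := by
    exact_mod_cast Nat.factorial_pos _
  exact le_of_mul_le_mul_left hsum hpos
end

section
/- Let n ≥ 1 and let A be a 2n×2n real matrix. For 0 ≤ k ≤ 2n let σ_k(A) denote the sum of all principal k×k minors of A (so σ₀(A) = 1 and σ_k(A) is, up to sign, the coefficient of the characteristic polynomial of A). Then √det(I_{2n} + Aᵀ A) ≥ Σ_{k=0}^{n} C(n,k) · C(2n,2k)⁻¹ · |σ_{2k}(A)|. -/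
open Matrix BigOperators

/-- The sum of all principal `k × k` minors of a square real matrix `A`
(the `k`-th elementary symmetric function of `A`; `σ₀ = 1`). -/
noncomputable def sigmaMinors {N : ℕ} (A : Matrix (Fin N) (Fin N) ℝ) (k : ℕ) : ℝ :=
  ∑ I ∈ Finset.univ.powersetCard k,
    if h : I.card = k then
      (A.submatrix (fun i : Fin k => I.orderEmbOfFin h i)
        (fun j : Fin k => I.orderEmbOfFin h j)).det
    else 0

lemma aux_hadamard {k : ℕ} (M : Matrix (Fin k) (Fin k) ℝ) :
    |M.det| ≤ ∏ j, Real.sqrt (∑ i, M i j ^ 2) := by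
  have : Fact (Module.finrank ℝ (EuclideanSpace ℝ (Fin k)) = k) := ⟨by simp⟩
  let b := EuclideanSpace.basisFun (Fin k) ℝ
  have h := (b.toBasis.orientation).abs_volumeForm_apply_le (fun j => WithLp.toLp 2 (fun i => M i j))
  rw [Orientation.volumeForm_robust _ b rfl] at h
  simp only [EuclideanSpace.norm_eq, Real.norm_eq_abs, sq_abs] at h
  convert h using 2
  rw [Module.Basis.det_apply]
  rfl

lemma aux_sigma_coeff {N : ℕ} (A : Matrix (Fin N) (Fin N) ℝ) (k : ℕ) :
    sigmaMinors A k =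
      (det (1 + (Polynomial.X : Polynomial ℝ) • A.map Polynomial.C)).coeff k := by
  rw [coeff_det_one_add_X_smul_eq_sum_minors, sigmaMinors]
  refine Finset.sum_congr rfl fun I hI => ?_
  have h : I.card = k := (Finset.mem_powersetCard.1 hI).2
  rw [dif_pos h, ← Matrix.det_submatrix_equiv_self (I.orderIsoOfFin h).toEquiv]
  rfl

lemma aux_sigma_conj {N : ℕ} (A V W : Matrix (Fin N) (Fin N) ℝ) (h : W * V = 1) (k : ℕ) :
    sigmaMinors (W * A * V) k = sigmaMinors A k := by
  rw [aux_sigma_coeff, aux_sigma_coeff]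
  congr 1
  have h1 : W.map Polynomial.C * V.map Polynomial.C = 1 := by
    rw [← Matrix.map_mul, h]; simp
  have h2 : V.map Polynomial.C * W.map Polynomial.C = 1 := mul_eq_one_comm.1 h1
  have : (1 + (Polynomial.X : Polynomial ℝ) • (W * A * V).map Polynomial.C) =
    W.map Polynomial.C * (1 + (Polynomial.X : Polynomial ℝ) • A.map Polynomial.C) * V.map Polynomial.C := by
    rw [Matrix.map_mul, Matrix.map_mul, mul_add, add_mul, mul_one, h1]
    simp
  rw [this, det_mul, det_mul, mul_right_comm, ← det_mul, h1, det_one, one_mul]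

lemma aux_sigma_le {N : ℕ} (B : Matrix (Fin N) (Fin N) ℝ) (k : ℕ) :
    |sigmaMinors B k| ≤ ∑ I ∈ (Finset.univ : Finset (Fin N)).powersetCard k,
      ∏ j ∈ I, Real.sqrt (∑ i, B i j ^ 2) := by
  unfold sigmaMinors
  refine (Finset.abs_sum_le_sum_abs _ _).trans (Finset.sum_le_sum fun I hI => ?_)
  have h : I.card = k := (Finset.mem_powersetCard.1 hI).2
  rw [dif_pos h]
  refine (aux_hadamard _).trans ?_
  have : ∏ j ∈ I, Real.sqrt (∑ i, B i j ^ 2) =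
      ∏ j : Fin k, Real.sqrt (∑ i, B i (I.orderEmbOfFin h j) ^ 2) := by
    conv_lhs => rw [← Finset.map_orderEmbOfFin_univ I h, Finset.prod_map]
    rfl
  rw [this]
  refine Finset.prod_le_prod (fun _ _ => Real.sqrt_nonneg _) fun j _ => ?_
  refine Real.sqrt_le_sqrt ?_
  simp only [submatrix_apply]
  have := Finset.sum_map Finset.univ (I.orderEmbOfFin h).toEmbedding
    (fun i => B i (I.orderEmbOfFin h j) ^ 2)
  simp only [RelEmbedding.coe_toEmbedding] at this
  rw [← this]
  exact Finset.sum_le_sum_of_subset_of_nonneg (Finset.subset_univ _) fun _ _ _ => sq_nonneg _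

lemma aux_perm_dep {α : Type*} [Fintype α] [DecidableEq α] (s : α → ℝ) (U T : Finset α)
    (h : U.card = T.card) :
    ∑ p : Equiv.Perm α, ∏ x ∈ U, s (p x) = ∑ p : Equiv.Perm α, ∏ x ∈ T, s (p x) := by
  let e : {x // x ∈ U} ≃ {x // x ∈ T} := Finset.equivOfCardEq h
  let q : Equiv.Perm α := e.extendSubtype
  have hq : T = U.map q.toEmbedding := by
    symm
    apply Finset.eq_of_subset_of_card_le
    · intro x hx
      obtain ⟨y, hy, rfl⟩ := Finset.mem_map.1 hx
      exact e.extendSubtype_mem y hy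
    · simp [h]
  rw [hq, ← Equiv.sum_comp (Equiv.mulRight q)]
  simp [Finset.prod_map]

lemma aux_perm_sum {α : Type*} [Fintype α] [DecidableEq α] (s : α → ℝ) (U : Finset α) :
    ((Fintype.card α).choose U.card : ℝ) * ∑ p : Equiv.Perm α, ∏ x ∈ U, s (p x) =
      (Fintype.card (Equiv.Perm α)) *
        ∑ T ∈ (Finset.univ : Finset α).powersetCard U.card, ∏ x ∈ T, s x := by
  have h1 : ∑ T ∈ (Finset.univ : Finset α).powersetCard U.card,
      ∑ p : Equiv.Perm α, ∏ x ∈ T, s (p x) =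
      ((Fintype.card α).choose U.card : ℝ) * ∑ p : Equiv.Perm α, ∏ x ∈ U, s (p x) := by
    rw [Finset.sum_congr rfl (fun T hT => aux_perm_dep s T U (Finset.mem_powersetCard.1 hT).2)]
    simp
  rw [← h1, Finset.sum_comm]
  rw [Finset.sum_congr rfl (g := fun _ =>
    ∑ T ∈ (Finset.univ : Finset α).powersetCard U.card, ∏ x ∈ T, s x)]
  · simp
  intro p _
  conv_rhs => rw [← Finset.map_univ_equiv p, Finset.powersetCard_map, Finset.sum_map]
  refine Finset.sum_congr rfl fun T _ => ?_
  simp [Finset.prod_map]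

lemma aux_pair {n : ℕ} {α : Type*} [Fintype α] [DecidableEq α] (e : Fin n × Fin 2 ≃ α)
    (s : α → ℝ) :
    ∑ T : Finset (Fin n), ∏ x ∈ (T ×ˢ (Finset.univ : Finset (Fin 2))).map e.toEmbedding, s x
      ≤ ∏ x, Real.sqrt (1 + s x ^ 2) := by
  rw [← Equiv.prod_comp e, Fintype.prod_prod_type]
  simp only [Finset.prod_map, Finset.prod_product, Fin.prod_univ_two]
  have := Finset.prod_one_add (f := fun i => s (e (i, 0)) * s (e (i, 1))) Finset.univ
  rw [Finset.powerset_univ] at this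
  have h2 : ∀ i, |1 + s (e (i, 0)) * s (e (i, 1))| ≤
      Real.sqrt (1 + s (e (i, 0)) ^ 2) * Real.sqrt (1 + s (e (i, 1)) ^ 2) := by
    intro i
    rw [← Real.sqrt_mul (by positivity)]
    apply Real.abs_le_sqrt
    nlinarith [sq_nonneg (s (e (i, 0)) - s (e (i, 1)))]
  calc _ = ∏ i, (1 + s (e (i, 0)) * s (e (i, 1))) := this.symm
    _ ≤ |∏ i, (1 + s (e (i, 0)) * s (e (i, 1)))| := le_abs_self _
    _ ≤ _ := by
      rw [Finset.abs_prod]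
      exact Finset.prod_le_prod (fun _ _ => abs_nonneg _) fun i _ => h2 i

lemma aux_comb (n : ℕ) (s : Fin (2 * n) → ℝ) :
    ∑ k ∈ Finset.range (n + 1), (n.choose k : ℝ) * ((2 * n).choose (2 * k) : ℝ)⁻¹ *
      ∑ I ∈ (Finset.univ : Finset (Fin (2 * n))).powersetCard (2 * k), ∏ j ∈ I, s j
      ≤ ∏ x, Real.sqrt (1 + s x ^ 2) := by
  let e : Fin n × Fin 2 ≃ Fin (2 * n) := Fintype.equivOfCardEq (by simp [mul_comm])
  let U : Finset (Fin n) → Finset (Fin (2 * n)) :=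
    fun T => (T ×ˢ (Finset.univ : Finset (Fin 2))).map e.toEmbedding
  have hU : ∀ T, (U T).card = 2 * T.card := fun T => by simp [U, mul_comm]
  have h1 : ∀ p : Equiv.Perm (Fin (2 * n)), ∑ T, ∏ x ∈ U T, s (p x) ≤
      ∏ x, Real.sqrt (1 + s x ^ 2) := by
    intro p
    refine (aux_pair e (fun x => s (p x))).trans_eq ?_
    exact Equiv.prod_comp p (fun x => Real.sqrt (1 + s x ^ 2))
  have h2 := Finset.sum_le_sum (s := Finset.univ) fun p _ => h1 p
  rw [Finset.sum_comm, Finset.sum_const, nsmul_eq_mul, Finset.card_univ] at h2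
  have hpos : (0 : ℝ) < Fintype.card (Equiv.Perm (Fin (2 * n))) := by
    exact_mod_cast Fintype.card_pos
  refine le_of_mul_le_mul_left (le_trans (le_of_eq ?_) h2) hpos
  rw [← Finset.powerset_univ, Finset.sum_powerset, Finset.mul_sum]
  simp only [Finset.card_univ, Fintype.card_fin]
  refine Finset.sum_congr rfl fun k hk => ?_
  have hk' : k ≤ n := by simpa [Nat.lt_succ_iff] using hk
  have hc : ((2 * n).choose (2 * k) : ℝ) ≠ 0 := by
    exact_mod_cast (Nat.choose_pos (by omega)).ne'
  symm
  rw [Finset.sum_congr rfl (g := fun _ => ((2 * n).choose (2 * k) : ℝ)⁻¹ *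
    ((Fintype.card (Equiv.Perm (Fin (2 * n)))) *
    ∑ I ∈ (Finset.univ : Finset (Fin (2 * n))).powersetCard (2 * k), ∏ j ∈ I, s j))]
  · rw [Finset.sum_const, Finset.card_powersetCard, nsmul_eq_mul, Finset.card_univ,
      Fintype.card_fin]
    ring
  intro T hT
  have hT' : (U T).card = 2 * k := by rw [hU, (Finset.mem_powersetCard.1 hT).2]
  have := aux_perm_sum s (U T)
  rw [hT', Fintype.card_fin] at this
  rw [← this]
  field_simp

/-- For a `2n × 2n` real matrix `A`,
`√det(I + Aᵀ A) ≥ ∑_{k=0}^{n} C(n,k) C(2n,2k)⁻¹ |σ_{2k}(A)|`. -/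
theorem sqrt_det_one_add_ge_sum_abs_sigma
    (n : ℕ) (hn : 1 ≤ n) (A : Matrix (Fin (2 * n)) (Fin (2 * n)) ℝ) :
    Real.sqrt (1 + Aᵀ * A).det ≥
      ∑ k ∈ Finset.range (n + 1),
        (n.choose k : ℝ) * ((2 * n).choose (2 * k) : ℝ)⁻¹ *
          |sigmaMinors A (2 * k)| := by
  have hH : (Aᵀ * A).IsHermitian := by
    simpa using isHermitian_conjTranspose_mul_self A
  obtain ⟨V, W, d, hWV, hWt, hd⟩ : ∃ V W : Matrix (Fin (2 * n)) (Fin (2 * n)) ℝ, ∃ d,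
      W * V = 1 ∧ Vᵀ = W ∧ W * (Aᵀ * A) * V = diagonal d := by
    refine ⟨hH.eigenvectorUnitary, star (hH.eigenvectorUnitary : Matrix _ _ ℝ),
      hH.eigenvalues, by simp, ?_, ?_⟩
    · rw [star_eq_conjTranspose, conjTranspose_eq_transpose_of_trivial]
    · have := hH.conjStarAlgAut_star_eigenvectorUnitary
      rw [Unitary.conjStarAlgAut_apply] at this
      simpa using this
  have hVW : V * W = 1 := mul_eq_one_comm.1 hWV
  set B := W * A * V with hB
  have hBB : Bᵀ * B = diagonal d := by
    rw [hB, transpose_mul, transpose_mul, hWt, ← hWt, transpose_transpose, hWt, ← hd]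
    calc W * (Aᵀ * V) * (W * A * V) = W * Aᵀ * (V * W) * A * V := by simp only [mul_assoc]
      _ = _ := by rw [hVW]; simp only [mul_assoc, one_mul]
  have hdj : ∀ j, d j = Real.sqrt (∑ i, B i j ^ 2) ^ 2 := by
    intro j
    rw [Real.sq_sqrt (Finset.sum_nonneg fun _ _ => sq_nonneg _)]
    have := congrFun (congrFun hBB j) j
    rw [diagonal_apply_eq, mul_apply] at this
    rw [← this]
    simp [sq]
  have hdet : (1 + Aᵀ * A).det = ∏ j, (1 + d j) := by
    have : W * (1 + Aᵀ * A) * V = diagonal (fun j => 1 + d j) := by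
      rw [mul_add, add_mul, mul_one, hWV, hd, ← diagonal_one, diagonal_add]
    rw [← det_diagonal, ← this, det_mul, det_mul, mul_right_comm, ← det_mul, hWV, det_one, one_mul]
  rw [hdet, Real.sqrt_prod _ (fun j _ => by rw [hdj]; positivity)]
  simp only [hdj]
  refine le_trans ?_ (aux_comb n (fun j => Real.sqrt (∑ i, B i j ^ 2)))
  refine Finset.sum_le_sum fun k _ => ?_
  refine mul_le_mul_of_nonneg_left ?_ (by positivity)
  rw [← aux_sigma_conj A V W hWV]
  exact aux_sigma_le B (2 * k)
end

section
/- For every natural number n ≥ 1, one has 4ⁿ / C(2n, n) < √(2πn), where C(2n, n) is the central binomial coefficient. -/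
theorem sixteen_pow_le_aux (n : ℕ) (hn : 1 ≤ n) :
    (16 : ℝ) ^ n ≤ 4 * n * (n.centralBinom : ℝ) ^ 2 := by
  induction n, hn using Nat.le_induction with
  | base => norm_num [Nat.centralBinom, Nat.choose]
  | succ n hn ih =>
    have h : ((n : ℝ) + 1) * ((n + 1).centralBinom : ℝ)
        = 2 * (2 * n + 1) * (n.centralBinom : ℝ) := by
      exact_mod_cast Nat.succ_mul_centralBinom_succ n
    have hpos : (0 : ℝ) < (n : ℝ) + 1 := by positivity
    have h2 : (((n : ℝ) + 1) * ((n + 1).centralBinom : ℝ)) ^ 2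
        = (2 * (2 * n + 1) * (n.centralBinom : ℝ)) ^ 2 := by rw [h]
    have h3 := mul_le_mul_of_nonneg_left ih hpos.le
    refine le_of_mul_le_mul_left ?_ hpos
    push_cast
    rw [pow_succ]
    nlinarith [sq_nonneg (n.centralBinom : ℝ)]

/-- `4ⁿ / C(2n,n) < √(2πn)` for every `n ≥ 1`:
the volume of the radial field is smaller than the volume of Pedersen's field. -/
theorem four_pow_div_centralBinom_lt_sqrt_two_pi_n (n : ℕ) (hn : 1 ≤ n) :
    (4 : ℝ) ^ n / ((2 * n).choose n : ℝ) < Real.sqrt (2 * Real.pi * n) := by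
  have h := sixteen_pow_le_aux n hn
  rw [Nat.centralBinom] at h
  have hC : (0 : ℝ) < ((2 * n).choose n : ℝ) := by
    exact_mod_cast Nat.centralBinom_pos n
  have hn' : (0 : ℝ) < n := by exact_mod_cast hn
  apply Real.lt_sqrt_of_sq_lt
  rw [div_pow, div_lt_iff₀ (by positivity), ← pow_mul, mul_comm n 2, pow_mul]
  norm_num only
  refine lt_of_le_of_lt h ?_
  have : (4 : ℝ) * n < 2 * Real.pi * n := by nlinarith [Real.pi_gt_three]
  exact mul_lt_mul_of_pos_right this (by positivity)
end
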